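/- For p=3 and partitions λ=(λ₁≥λ₂≥λ₃), μ=(μ₁≥μ₂≥μ₃) with μ₁ ≤ λ₁ (so that paths exist for large boards), and any f with 0 ≤ f ≤ λ₂+λ₃, the partial sum c(λ,μ;f) = Σ det M(i,j,k), taken over all (i,j,k) with 0 ≤ k ≤ λ₂, 0 ≤ i ≤ k, 0 ≤ j ≤ λ₃ and j+k = f, is nonnegative, where M(i,j,k) is the 3×3 matrix with rows [C(λ₁-k, μ_c-(c-1)-k)]_c, [C(λ₂-j, μ_c+1-(c-1)+i-j)]_c, [C(λ₃, μ_c+2-(c-1)+(k-i)+j)]_c for columns c=1,2,3. -/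

import Mathlib

/-- Binomial coefficient on integers, equal to `0` when `k < 0` or `k > n`. -/
def ichoose (n k : ℤ) : ℤ :=
  if 0 ≤ k ∧ k ≤ n then (Nat.choose n.toNat k.toNat : ℤ) else 0

/-- The matrix `M(i,j,k)` of the `p = 3` setting. -/
def M3 (lam1 lam2 lam3 mu1 mu2 mu3 i j k : ℤ) : Matrix (Fin 3) (Fin 3) ℤ :=
  !![ichoose (lam1 - k) (mu1 - k),
     ichoose (lam1 - k) (mu2 - 1 - k),
     ichoose (lam1 - k) (mu3 - 2 - k);
     ichoose (lam2 - j) (mu1 + 1 + i - j),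
     ichoose (lam2 - j) (mu2 + i - j),
     ichoose (lam2 - j) (mu3 - 1 + i - j);
     ichoose lam3 (mu1 + 2 + (k - i) + j),
     ichoose lam3 (mu2 + 1 + (k - i) + j),
     ichoose lam3 (mu3 + (k - i) + j)]

/-!
Each row of `M(i,j,k)` lists coefficients of a Laurent polynomial `x ^ p * (1 + x) ^ (t - p)`. If
both the lower ends `p` and the upper ends `t` decrease down the rows, the determinant is
nonnegative: Pascal's rule, applied to a longest row, writes it as the sum of two determinants with
that row shortened at either end, and this keeps the rows ordered unless two rows were equal.

The terms of the sum without ordered rows are handled in groups, according to whether `2 * i < j`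
(with `i` fixed) or `j ≤ 2 * i` (with `j` fixed). Reflecting the range of the free index exchanges
one end of the first two rows, respectively of the last two. If the other ends, respectively the
lengths, of these two rows agreed, the terms would cancel in pairs. Pascal's rule lengthens one of
the two rows step by step, and each step adds a determinant with ordered rows and a shorter sum of
the same shape.
-/

section ichoose

theorem ichoose_natCast (n k : ℕ) : ichoose n k = n.choose k := by
  rcases le_or_gt k n with h | h
  · simp [ichoose, h]
  · simp [ichoose, h.not_ge, Nat.choose_eq_zero_of_lt h]

theorem ichoose_eq_zero_of_neg (n : ℤ) {k : ℤ} (hk : k < 0) : ichoose n k = 0 :=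
  if_neg fun h => hk.not_ge h.1

theorem ichoose_eq_zero_of_lt {n k : ℤ} (h : n < k) : ichoose n k = 0 :=
  if_neg fun h' => h.not_ge h'.2

theorem ichoose_zero_left (k : ℤ) : ichoose 0 k = if k = 0 then 1 else 0 := by
  rcases lt_trichotomy k 0 with hk | rfl | hk
  · rw [ichoose_eq_zero_of_neg 0 hk, if_neg hk.ne]
  · rfl
  · rw [ichoose_eq_zero_of_lt hk, if_neg hk.ne']

theorem ichoose_add_one_left {n : ℤ} (hn : 0 ≤ n) (k : ℤ) :
    ichoose (n + 1) k = ichoose n k + ichoose n (k - 1) := by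
  lift n to ℕ using hn
  rcases lt_or_ge k 0 with hk | hk
  · simp only [ichoose_eq_zero_of_neg _ hk, ichoose_eq_zero_of_neg _ (show k - 1 < 0 by omega),
      add_zero]
  lift k to ℕ using hk
  rw [← Nat.cast_succ]
  cases k with
  | zero =>
    rw [ichoose_eq_zero_of_neg _ (show ((0 : ℕ) : ℤ) - 1 < 0 by decide)]
    simp only [ichoose_natCast, Nat.choose_zero_right, add_zero]
  | succ k =>
    rw [Nat.cast_succ k, add_sub_cancel_right, ← Nat.cast_succ]
    simp only [ichoose_natCast, Nat.choose_succ_succ, Nat.cast_add, add_comm]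

end ichoose

section order

theorem perm_eq_one_of_strictMono {α : Type*} [LinearOrder α] [WellFoundedLT α] {σ : Equiv.Perm α}
    (hσ : StrictMono σ) : σ = 1 := by
  have h : hσ.orderIsoOfSurjective σ σ.surjective = OrderIso.refl α := Subsingleton.elim _ _
  ext i
  exact DFunLike.congr_fun h i

theorem antitone_update {α β : Type*} [PartialOrder α] [DecidableEq α] [Preorder β] {g : α → β}
    (hg : Antitone g) {i : α} {x : β} (hlt : ∀ j < i, x ≤ g j) (hgt : ∀ j, i < j → g j ≤ x) :
    Antitone (Function.update g i x) := by
  intro j k hjk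
  obtain rfl | hj := eq_or_ne j i <;> obtain rfl | hk := eq_or_ne k j
  · rfl
  · simpa [hk] using hgt k (hjk.lt_of_ne' hk)
  · rfl
  · obtain rfl | hk := eq_or_ne k i
    · simpa [hj] using hlt j (hjk.lt_of_ne hj)
    · simpa [hj, hk] using hg hjk

theorem exists_antitone_update_sub_one_add_one {ι : Type*} [Finite ι] [LinearOrder ι] {p t : ι → ℤ}
    (hp : Antitone p) (ht : Antitone t) (hinj : Function.Injective fun i => (p i, t i))
    (hlt : ∃ i, p i < t i) :
    ∃ i, p i < t i ∧ Antitone (Function.update t i (t i - 1)) ∧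
      Antitone (Function.update p i (p i + 1)) := by
  obtain ⟨i₀, hi₀⟩ := hlt
  have : Nonempty ι := ⟨i₀⟩
  obtain ⟨i, hlongest⟩ := Finite.exists_max fun i => t i - p i
  have hgap : ∀ j, i < j → t j ≤ t i - 1 ∧ p j ≤ p i := fun j hij => by
    have hne : ¬(p i = p j ∧ t i = t j) := fun h => hij.ne (hinj (Prod.ext h.1 h.2))
    have := hp hij.le
    have := ht hij.le
    have := hlongest j
    omega
  have hgap' : ∀ j < i, p i + 1 ≤ p j ∧ t i ≤ t j := fun j hij => by
    have hne : ¬(p j = p i ∧ t j = t i) := fun h => hij.ne (hinj (Prod.ext h.1 h.2))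
    have := hp hij.le
    have := ht hij.le
    have := hlongest j
    omega
  refine ⟨i, ?_, antitone_update ht ?_ fun j hj => (hgap j hj).1,
    antitone_update hp (fun j hj => (hgap' j hj).1) ?_⟩
  · have := hlongest i₀
    omega
  · exact fun j hj => (sub_one_lt _).le.trans (hgap' j hj).2
  · exact fun j hj => (hgap j hj).2.trans (lt_add_one _).le

end order

/-- The coefficient sequence of the Laurent polynomial `x ^ p * (1 + x) ^ (t - p)`, encoded by the
ends `p ≤ t` of its support. It is zero for `t < p`. -/
def binomRow (p t e : ℤ) : ℤ := ichoose (t - p) (e - p)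

theorem binomRow_self (p : ℤ) : binomRow p p = Pi.single p 1 := by
  ext e
  simp only [binomRow, sub_self, ichoose_zero_left, sub_eq_zero, Pi.single_apply]

theorem binomRow_eq_zero_of_lt {p t e : ℤ} (h : t < e) : binomRow p t e = 0 :=
  ichoose_eq_zero_of_lt (by omega)

theorem binomRow_eq_add {p t : ℤ} (h : p < t) :
    binomRow p t = binomRow p (t - 1) + binomRow (p + 1) t := by
  ext e
  have pascal := ichoose_add_one_left (show 0 ≤ t - p - 1 by omega) (e - p)
  rw [sub_add_cancel] at pascal
  simp only [binomRow, Pi.add_apply, pascal, sub_sub, add_comm p 1]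

section rowMinor

variable {ι : Type*} [Fintype ι]

/-- The minor of a family of rows `ℤ → ℤ` in the columns `e`, as an alternating map in the rows. -/
def rowMinor [DecidableEq ι] (e : ι → ℤ) : (ℤ → ℤ) [⋀^ι]→ₗ[ℤ] ℤ :=
  Matrix.detRowAlternating.compLinearMap (LinearMap.funLeft ℤ ℤ e)

theorem rowMinor_apply [DecidableEq ι] (e : ι → ℤ) (u : ι → ℤ → ℤ) :
    rowMinor e u = (Matrix.of fun i j => u i (e j)).det :=
  rfl

theorem rowMinor_eq_zero_of_row [DecidableEq ι] {e : ι → ℤ} {u : ι → ℤ → ℤ} (i : ι)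
    (hi : ∀ j, u i (e j) = 0) : rowMinor e u = 0 :=
  Matrix.det_eq_zero_of_row_eq_zero i hi

theorem rowMinor_rotate (e : Fin 3 → ℤ) (u v w : ℤ → ℤ) :
    rowMinor e ![w, u, v] = rowMinor e ![u, v, w] := by
  simp only [rowMinor_apply, Matrix.det_fin_three, Matrix.of_apply, Matrix.cons_val]
  ring

theorem rowMinor_binomRow_eq_add [DecidableEq ι] (e p t : ι → ℤ) {i : ι} (hi : p i < t i) :
    rowMinor e (fun j => binomRow (p j) (t j)) =
      rowMinor e (fun j => binomRow (p j) (Function.update t i (t i - 1) j)) +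
        rowMinor e (fun j => binomRow (Function.update p i (p i + 1) j) (t j)) := by
  set u : ι → ℤ → ℤ := fun j => binomRow (p j) (t j)
  rw [← Function.update_eq_self i u, show u i = _ from binomRow_eq_add hi,
    AlternatingMap.map_update_add]
  congr 2 <;> ext1 j <;> obtain rfl | hj := eq_or_ne j i <;> simp [u, *]

variable [LinearOrder ι]

theorem rowMinor_single_nonneg {e p : ι → ℤ} (he : StrictAnti e) (hp : Antitone p) :
    0 ≤ rowMinor e (fun i => Pi.single (p i) 1) := by
  rw [rowMinor_apply, Matrix.det_apply, Finset.sum_eq_single 1]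
  · rw [Equiv.Perm.sign_one, one_smul]
    refine Finset.prod_nonneg fun i _ => ?_
    simp only [Matrix.of_apply, Pi.single_apply]
    split_ifs <;> decide
  · intro σ _ hσ
    suffices ∃ i, e i ≠ p (σ i) by
      obtain ⟨i, hi⟩ := this
      rw [Finset.prod_eq_zero (Finset.mem_univ i) (Pi.single_eq_of_ne hi _), smul_zero]
    by_contra! heq
    refine hσ (perm_eq_one_of_strictMono fun i j hij => hp.reflect_lt ?_)
    rw [← heq i, ← heq j]
    exact he hij
  · exact fun h => absurd (Finset.mem_univ _) h

theorem rowMinor_binomRow_nonneg {e p t : ι → ℤ} (he : StrictAnti e) (hp : Antitone p)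
    (ht : Antitone t) (hpt : p ≤ t) : 0 ≤ rowMinor e (fun i => binomRow (p i) (t i)) := by
  obtain ⟨N, hN⟩ : ∃ N : ℕ, ∑ i, t i - ∑ i, p i = N :=
    Int.eq_ofNat_of_zero_le (sub_nonneg.mpr (Finset.sum_le_sum fun i _ => hpt i))
  induction N generalizing p t with
  | zero =>
    have hpt_eq : p = t := funext fun i =>
      (Finset.sum_eq_sum_iff_of_le fun i _ => hpt i).mp (by omega) i (Finset.mem_univ i)
    simpa only [← hpt_eq, binomRow_self] using rowMinor_single_nonneg he hp
  | succ N ih =>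
    by_cases hinj : Function.Injective fun i => (p i, t i)
    swap
    · exact (AlternatingMap.map_eq_zero_of_not_injective _ _ fun h =>
        hinj (Function.Injective.of_comp (f := fun q : ℤ × ℤ => binomRow q.1 q.2) h)).ge
    have hlt : ∃ i ∈ Finset.univ, p i < t i := Finset.exists_lt_of_sum_lt (by omega)
    obtain ⟨i, hi, ht', hp'⟩ :=
      exists_antitone_update_sub_one_add_one hp ht hinj (by simpa using hlt)
    have hsum (g : ι → ℤ) (x : ℤ) : ∑ j, Function.update g i x j = ∑ j, g j - g i + x := by
      rw [Finset.sum_update_of_mem (Finset.mem_univ i),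
        ← Finset.add_sum_erase _ g (Finset.mem_univ i), Finset.sdiff_singleton_eq_erase]
      ring
    rw [rowMinor_binomRow_eq_add e p t hi]
    refine add_nonneg (ih hp ht' ?_ ?_) (ih hp' ht ?_ ?_)
    · exact le_update_iff.mpr ⟨by omega, fun j _ => hpt j⟩
    · rw [hsum]
      omega
    · exact update_le_iff.mpr ⟨hi, fun j _ => hpt j⟩
    · rw [hsum]
      omega

end rowMinor

section exchange

variable {R M N : Type*} [CommRing R] [AddCommGroup M] [Module R M] [AddCommGroup N] [Module R N]

theorem alternating_pair_swap (f : M [⋀^Fin 2]→ₗ[R] N) (u v : M) : f ![v, u] = -f ![u, v] := by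
  rw [← f.map_swap ![u, v] (show (0 : Fin 2) ≠ 1 by decide)]
  congr 1
  ext i
  fin_cases i <;> rfl

theorem sum_alternating_reflect_eq_zero (f : M [⋀^Fin 2]→ₗ[R] N) (x : ℤ → M) (a b : ℤ) :
    ∑ q ∈ Finset.Icc a b, f ![x (a + b - q), x q] = 0 := by
  refine Finset.sum_involution (fun q _ => a + b - q) (fun q _ => ?_) (fun q _ hq hfix => hq ?_)
    (fun q hq => ?_) (fun q _ => sub_sub_cancel _ _)
  · rw [sub_sub_cancel, alternating_pair_swap f (x q), neg_add_cancel]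
  · rw [hfix]
    exact f.map_eq_zero_of_eq (i := 0) (j := 1) ![x q, x q] rfl (by decide)
  · rw [Finset.mem_Icc] at hq ⊢
    omega

variable [PartialOrder N] [IsOrderedAddMonoid N]

theorem sum_exchange_nonneg (f : M [⋀^Fin 2]→ₗ[R] N) {x : ℕ → ℤ → M} {r : ℕ → ℕ} {D : ℕ} {a b : ℤ}
    (hr : ∀ d, r d ≤ d + 1) (hx : ∀ d, ∀ p ≤ b, x (d + 1) p = x d p + x (r d) (p + 1))
    (hf : ∀ d < D, ∀ q ∈ Finset.Icc a b, 0 ≤ f ![x (r d) (b + 1), x 0 q]) :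
    0 ≤ ∑ q ∈ Finset.Icc a b, f ![x D (a + b - q), x 0 q] := by
  obtain ⟨n, hn⟩ : ∃ n : ℕ, (b + 1 - a).toNat = n := ⟨_, rfl⟩
  induction n generalizing a D with
  | zero => rw [Finset.Icc_eq_empty (by omega), Finset.sum_empty]
  | succ n ihn =>
    have hsub : Finset.Icc (a + 1) b ⊆ Finset.Icc a b :=
      Finset.Icc_subset_Icc_left (lt_add_one a).le
    induction D with
    | zero => exact (sum_alternating_reflect_eq_zero f (x 0) a b).ge
    | succ D ihD =>
      have hab : a ≤ b := by omega
      have hpascal : ∀ q ∈ Finset.Icc a b, f ![x (D + 1) (a + b - q), x 0 q] =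
          f ![x D (a + b - q), x 0 q] + f ![x (r D) (a + 1 + b - q), x 0 q] := fun q hq => by
        rw [Finset.mem_Icc] at hq
        rw [hx D _ (by omega), f.map_vecCons_add, add_right_comm a 1, sub_add_eq_add_sub]
      have hfirst : ∑ q ∈ Finset.Icc a b, f ![x (r D) (a + 1 + b - q), x 0 q] =
          f ![x (r D) (b + 1), x 0 a] +
            ∑ q ∈ Finset.Icc (a + 1) b, f ![x (r D) (a + 1 + b - q), x 0 q] := by
        rw [← Finset.insert_Icc_add_one_left_eq_Icc hab, Finset.sum_insert (by simp),
          show a + 1 + b - a = b + 1 by ring]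
      rw [Finset.sum_congr rfl hpascal, Finset.sum_add_distrib, hfirst]
      refine add_nonneg (ihD fun d hd => hf d (by omega)) (add_nonneg ?_ (ihn ?_ (by omega)))
      · exact hf D (lt_add_one D) a (Finset.left_mem_Icc.mpr hab)
      · exact fun d hd q hq => hf d (by have := hr D; omega) q (hsub hq)

end exchange

section antidiagMinor

variable {e : Fin 3 → ℤ}

/-- The term of the partial sum at `(i, j, f - j)`, for `e = ![mu1, mu2 - 1, mu3 - 2]`: the
determinant of `M(i, j, f - j)` with its rows written as `binomRow`s, in arbitrary columns `e`. -/
def antidiagMinor (e : Fin 3 → ℤ) (lam1 lam2 lam3 f i j : ℤ) : ℤ :=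
  rowMinor e ![binomRow (f - j) lam1, binomRow (j - i - 1) (lam2 - i - 1),
    binomRow (i - f - 2) (lam3 + i - f - 2)]

theorem det_M3 (lam1 lam2 lam3 mu1 mu2 mu3 f i j : ℤ) :
    (M3 lam1 lam2 lam3 mu1 mu2 mu3 i j (f - j)).det =
      antidiagMinor ![mu1, mu2 - 1, mu3 - 2] lam1 lam2 lam3 f i j := by
  simp only [antidiagMinor, rowMinor_apply, Matrix.det_fin_three, M3, binomRow, Matrix.of_apply,
    Matrix.cons_val]
  ring_nf

theorem rowMinor_binomRow_three_nonneg (he : StrictAnti e) {p₁ p₂ p₃ t₁ t₂ t₃ : ℤ}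
    (hp : p₃ ≤ p₂ ∧ p₂ ≤ p₁) (ht : t₃ ≤ t₂ ∧ t₂ ≤ t₁) (hpt : p₁ ≤ t₁ ∧ p₂ ≤ t₂ ∧ p₃ ≤ t₃) :
    0 ≤ rowMinor e ![binomRow p₁ t₁, binomRow p₂ t₂, binomRow p₃ t₃] := by
  have key := rowMinor_binomRow_nonneg (p := ![p₁, p₂, p₃]) (t := ![t₁, t₂, t₃]) he
    (by simp [antitone_vecCons, hp]) (by simp [antitone_vecCons, ht])
    (by simp [Pi.le_def, Fin.forall_fin_succ, hpt])
  convert key using 2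
  ext i : 1
  fin_cases i <;> rfl

theorem sum_antidiagMinor_fixed_i_nonneg (he : StrictAnti e) {lam1 lam2 lam3 f i : ℤ}
    (hlam12 : lam2 ≤ lam1) (hlam23 : lam3 ≤ lam2) (hi : 0 ≤ i) (hfi : f - i ≤ lam3) :
    0 ≤ ∑ j ∈ Finset.Icc (2 * i + 1) (f - i), antidiagMinor e lam1 lam2 lam3 f i j := by
  obtain ⟨D, hD⟩ : ∃ D : ℕ, lam1 - lam2 + i + 1 = D := Int.eq_ofNat_of_zero_le (by omega)
  have key := sum_exchange_nonneg (D := D) (a := 2 * i + 1) (b := f - i)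
    ((rowMinor e).curryLeft (binomRow (i - f - 2) (lam3 + i - f - 2)))
    (x := fun d p => binomRow (p - i - 1) (lam2 - i - 1 + d)) (r := fun d => d + 1)
    (fun d => le_rfl) ?_ ?_
  · refine key.trans_eq (Finset.sum_congr rfl fun j _ => ?_)
    rw [AlternatingMap.curryLeft_apply_apply, rowMinor_rotate, antidiagMinor, ← hD]
    ring_nf
  · intro d p hp
    rw [binomRow_eq_add (by omega)]
    push_cast
    ring_nf
  · intro d _ q hq
    rw [Finset.mem_Icc] at hq
    rw [AlternatingMap.curryLeft_apply_apply, rowMinor_rotate]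
    apply rowMinor_binomRow_three_nonneg he <;> omega

theorem sum_antidiagMinor_fixed_j_nonneg_of_le (he : StrictAnti e) {lam1 lam2 lam3 f j : ℤ}
    (hlam12 : lam2 ≤ lam1) (hlam0 : 0 ≤ lam3) (hj : 0 ≤ j) (hfj : f - j ≤ lam2)
    (h : lam3 ≤ lam2 - j) :
    0 ≤ ∑ i ∈ Finset.Icc (2 * j + 1) (f - j), antidiagMinor e lam1 lam2 lam3 f i j := by
  obtain ⟨D, hD⟩ : ∃ D : ℕ, lam2 - j - lam3 = D := Int.eq_ofNat_of_zero_le (by omega)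
  have key := sum_exchange_nonneg (D := D) (a := 2 * j + 1) (b := f - j)
    ((rowMinor e).curryLeft (binomRow (f - j) lam1))
    (x := fun d p => binomRow (p - f - 2) (lam3 + p - f - 2 + d)) (r := fun d => d)
    (fun d => d.le_succ) ?_ ?_
  · refine key.trans_eq (Finset.sum_congr rfl fun i _ => ?_)
    rw [AlternatingMap.curryLeft_apply_apply, antidiagMinor, ← hD]
    ring_nf
  · intro d p _
    rw [binomRow_eq_add (by omega)]
    push_cast
    ring_nf
  · intro d _ q hq
    rw [Finset.mem_Icc] at hq
    rw [AlternatingMap.curryLeft_apply_apply]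
    apply rowMinor_binomRow_three_nonneg he <;> omega

theorem sum_antidiagMinor_fixed_j_nonneg_of_ge (he : StrictAnti e) {lam1 lam2 lam3 f j : ℤ}
    (hlam12 : lam2 ≤ lam1) (hlam23 : lam3 ≤ lam2) (hjlam : j ≤ lam2) (hfj : f - j ≤ lam2)
    (h : lam2 - j ≤ lam3) :
    0 ≤ ∑ i ∈ Finset.Icc (j + lam2 - lam3 + 1) (f - j), antidiagMinor e lam1 lam2 lam3 f i j := by
  obtain ⟨D, hD⟩ : ∃ D : ℕ, lam3 - (lam2 - j) = D := Int.eq_ofNat_of_zero_le (by omega)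
  have key := sum_exchange_nonneg (D := D) (a := j + lam2 - lam3 + 1) (b := f - j)
    (-(rowMinor e).curryLeft (binomRow (f - j) lam1))
    (x := fun d p => binomRow (j - p - 1 - d) (lam2 - p - 1)) (r := fun d => d)
    (fun d => d.le_succ) ?_ ?_
  · refine key.trans_eq (Finset.sum_congr rfl fun i _ => ?_)
    rw [alternating_pair_swap, AlternatingMap.neg_apply, neg_neg,
      AlternatingMap.curryLeft_apply_apply, antidiagMinor, ← hD]
    ring_nf
  · intro d p _
    rw [binomRow_eq_add (by omega), add_comm]
    push_cast
    ring_nf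
  · intro d _ q hq
    rw [Finset.mem_Icc] at hq
    rw [alternating_pair_swap, AlternatingMap.neg_apply, neg_neg,
      AlternatingMap.curryLeft_apply_apply]
    apply rowMinor_binomRow_three_nonneg he <;> omega

theorem antidiagMinor_nonneg (he : StrictAnti e) {lam1 lam2 lam3 f i j : ℤ}
    (hlam12 : lam2 ≤ lam1) (hlam0 : 0 ≤ lam3) (hjlam : j ≤ lam2) (hfj : f - j ≤ lam2)
    (hif : i ≤ f - j) (hji : j ≤ 2 * i) (hij : i ≤ 2 * j) (hijlam : i ≤ j + lam2 - lam3) :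
    0 ≤ antidiagMinor e lam1 lam2 lam3 f i j := by
  apply rowMinor_binomRow_three_nonneg he <;> omega

theorem antidiagMinor_eq_zero (he : ∀ c, -2 ≤ e c) {lam1 lam2 lam3 f i j : ℤ}
    (hfi : lam3 < f - i) : antidiagMinor e lam1 lam2 lam3 f i j = 0 :=
  rowMinor_eq_zero_of_row 2 fun c => binomRow_eq_zero_of_lt (by have := he c; omega)

theorem sum_antidiagMinor_of_two_mul_lt_nonneg (he : StrictAnti e) (he_ge : ∀ c, -2 ≤ e c)
    {lam1 lam2 lam3 f i : ℤ} (hlam12 : lam2 ≤ lam1) (hlam23 : lam3 ≤ lam2) (hi : 0 ≤ i) :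
    0 ≤ ∑ j ∈ Finset.Icc (max (2 * i + 1) (f - lam2)) (min lam3 (f - i)),
      antidiagMinor e lam1 lam2 lam3 f i j := by
  rcases lt_or_ge lam3 (f - i) with hfi | hfi
  · exact (Finset.sum_eq_zero fun j _ => antidiagMinor_eq_zero he_ge hfi).ge
  · rw [max_eq_left (by omega), min_eq_right hfi]
    exact sum_antidiagMinor_fixed_i_nonneg he hlam12 hlam23 hi hfi

theorem sum_antidiagMinor_of_le_two_mul_nonneg (he : StrictAnti e) {lam1 lam2 lam3 f j : ℤ}
    (hlam12 : lam2 ≤ lam1) (hlam23 : lam3 ≤ lam2) (hlam0 : 0 ≤ lam3) (hj : 0 ≤ j)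
    (hjlam : j ≤ lam2) (hfj : f - j ≤ lam2) :
    0 ≤ ∑ i ∈ Finset.Icc 0 (f - j) with j ≤ 2 * i, antidiagMinor e lam1 lam2 lam3 f i j := by
  rw [← Finset.sum_filter_add_sum_filter_not _ (fun i => i ≤ 2 * j ∧ i ≤ j + lam2 - lam3)]
  refine add_nonneg (Finset.sum_nonneg fun i hi => ?_) ?_
  · simp only [Finset.mem_filter, Finset.mem_Icc] at hi
    apply antidiagMinor_nonneg he <;> omega
  rcases le_total lam3 (lam2 - j) with h | h
  · refine (sum_antidiagMinor_fixed_j_nonneg_of_le he hlam12 hlam0 hj hfj h).trans_eq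
      (Finset.sum_congr (Finset.ext fun i => ?_) fun _ _ => rfl)
    simp only [Finset.mem_filter, Finset.mem_Icc]
    omega
  · refine (sum_antidiagMinor_fixed_j_nonneg_of_ge he hlam12 hlam23 hjlam hfj h).trans_eq
      (Finset.sum_congr (Finset.ext fun i => ?_) fun _ _ => rfl)
    simp only [Finset.mem_filter, Finset.mem_Icc]
    omega

end antidiagMinor

theorem sum_sum_sum_ite_add_eq {N : Type*} [AddCommMonoid N] (B C f : ℤ) (g : ℤ → ℤ → ℤ → N) :
    ∑ k ∈ Finset.Icc 0 B, ∑ i ∈ Finset.Icc 0 k, ∑ j ∈ Finset.Icc 0 C,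
        (if j + k = f then g i j k else 0) =
      ∑ j ∈ Finset.Icc 0 C with f - j ∈ Finset.Icc 0 B,
        ∑ i ∈ Finset.Icc 0 (f - j), g i j (f - j) := by
  calc
    _ = ∑ j ∈ Finset.Icc 0 C, ∑ k ∈ Finset.Icc 0 B,
          if k = f - j then ∑ i ∈ Finset.Icc 0 k, g i j k else 0 := by
      rw [Finset.sum_comm]
      refine Finset.sum_congr rfl fun k _ => ?_
      rw [Finset.sum_comm]
      refine Finset.sum_congr rfl fun j _ => ?_
      rw [Finset.sum_ite_irrel, Finset.sum_const_zero]
      simp only [eq_sub_iff_add_eq, add_comm]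
    _ = _ := by
      simp only [Finset.sum_ite_eq', ← Finset.sum_filter]

theorem partial_sum_nonneg_p3
    (lam1 lam2 lam3 mu1 mu2 mu3 f : ℤ)
    (hlam12 : lam2 ≤ lam1) (hlam23 : lam3 ≤ lam2) (hlam0 : 0 ≤ lam3)
    (hmu12 : mu2 ≤ mu1) (hmu23 : mu3 ≤ mu2) (hmu0 : 0 ≤ mu3)
    (hmu1 : mu1 ≤ lam1)
    (hf0 : 0 ≤ f) (hf : f ≤ lam2 + lam3) :
    0 ≤ ∑ k ∈ Finset.Icc (0 : ℤ) lam2, ∑ i ∈ Finset.Icc (0 : ℤ) k,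
          ∑ j ∈ Finset.Icc (0 : ℤ) lam3,
            if j + k = f then (M3 lam1 lam2 lam3 mu1 mu2 mu3 i j k).det else 0 := by
  rw [sum_sum_sum_ite_add_eq]
  simp only [det_M3]
  set e : Fin 3 → ℤ := ![mu1, mu2 - 1, mu3 - 2]
  have he : StrictAnti e := by
    simpa [e, strictAnti_vecCons] using ⟨by omega, by omega⟩
  have he_ge : ∀ c, -2 ≤ e c := fun c => by
    fin_cases c <;> dsimp [e] <;> omega
  rw [Finset.sum_congr rfl fun j _ =>
    (Finset.sum_filter_add_sum_filter_not _ (fun i => j ≤ 2 * i) _).symm, Finset.sum_add_distrib]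
  refine add_nonneg (Finset.sum_nonneg fun j hj => ?_) ?_
  · simp only [Finset.mem_filter, Finset.mem_Icc] at hj
    apply sum_antidiagMinor_of_le_two_mul_nonneg he hlam12 hlam23 hlam0 <;> omega
  · rw [Finset.sum_comm' (t' := Finset.Icc 0 f)
      (s' := fun i => Finset.Icc (max (2 * i + 1) (f - lam2)) (min lam3 (f - i)))]
    · refine Finset.sum_nonneg fun i hi => ?_
      exact sum_antidiagMinor_of_two_mul_lt_nonneg he he_ge hlam12 hlam23 (Finset.mem_Icc.mp hi).1
    · intro j i
      simp only [Finset.mem_filter, Finset.mem_Icc]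
      omega
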